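/- arXiv:1810.04946 — 4 statements merged into one kernel-verified Lean document; each statement's English description precedes it below -/
import Mathlib

section
/- Let n ≥ 1, let K be a real n×n symmetric positive definite matrix, let 𝟏 ∈ ℝⁿ be the all-ones vector and let f ∈ ℝⁿ. Then 𝟏ᵀK⁻¹𝟏 > 0 and the limit as σ → ∞ of σ² 𝟏ᵀ (σ²𝟏𝟏ᵀ + K)⁻¹ f exists and equals (K⁻¹𝟏 / (𝟏ᵀK⁻¹𝟏))ᵀ f. -/
open Matrix Filter

/-- The limit as `σ → ∞` of the Stein kernel estimator
`σ² 𝟏ᵀ (σ²𝟏𝟏ᵀ + K)⁻¹ f` is `(K⁻¹𝟏 / 𝟏ᵀK⁻¹𝟏)ᵀ f`. -/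
theorem stein_estimator_limit
    {n : ℕ} (hn : 1 ≤ n)
    (K : Matrix (Fin n) (Fin n) ℝ) (hK : K.PosDef) (f : Fin n → ℝ) :
    0 < (fun _ : Fin n => (1 : ℝ)) ⬝ᵥ (K⁻¹ *ᵥ (fun _ : Fin n => (1 : ℝ))) ∧
      Tendsto
        (fun σ : ℝ => σ ^ 2 * ((fun _ : Fin n => (1 : ℝ)) ⬝ᵥ
          ((σ ^ 2 • vecMulVec (fun _ : Fin n => (1 : ℝ)) (fun _ : Fin n => (1 : ℝ)) + K)⁻¹ *ᵥ f)))
        atTop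
        (nhds ((((fun _ : Fin n => (1 : ℝ)) ⬝ᵥ (K⁻¹ *ᵥ (fun _ : Fin n => (1 : ℝ))))⁻¹ •
          (K⁻¹ *ᵥ (fun _ : Fin n => (1 : ℝ)))) ⬝ᵥ f)) := by
  set u : Fin n → ℝ := fun _ => (1 : ℝ) with hu
  have hu0 : u ≠ 0 := fun h => by
    have := congrFun h ⟨0, hn⟩
    simp [hu] at this
  have ha : 0 < u ⬝ᵥ (K⁻¹ *ᵥ u) := by
    have := hK.inv.dotProduct_mulVec_pos hu0
    simpa using this
  refine ⟨ha, ?_⟩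
  have hKu : IsUnit K.det := (Matrix.isUnit_iff_isUnit_det K).1 hK.isUnit
  have hsym : (K⁻¹)ᵀ = K⁻¹ := by
    have := hK.inv.isHermitian
    simpa [Matrix.IsHermitian, Matrix.conjTranspose_eq_transpose_of_trivial] using this
  have hb : u ⬝ᵥ (K⁻¹ *ᵥ f) = (K⁻¹ *ᵥ u) ⬝ᵥ f := by
    rw [Matrix.dotProduct_mulVec, ← Matrix.mulVec_transpose, hsym]
  set a := u ⬝ᵥ (K⁻¹ *ᵥ u) with ha'
  have key : ∀ σ : ℝ, σ ^ 2 * (u ⬝ᵥ ((σ ^ 2 • vecMulVec u u + K)⁻¹ *ᵥ f))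
      = (1 - (σ ^ 2 * a + 1)⁻¹) * (a⁻¹ * ((K⁻¹ *ᵥ u) ⬝ᵥ f)) := by
    intro σ
    have hP : (σ ^ 2 • vecMulVec u u + K).PosDef := by
      have h1 : (vecMulVec u u).PosSemidef := by
        simpa using Matrix.posSemidef_vecMulVec_self_star u
      exact Matrix.PosDef.posSemidef_add (h1.smul (sq_nonneg σ)) hK
    have hMu := (Matrix.isUnit_iff_isUnit_det _).1 hP.isUnit
    set M := σ ^ 2 • vecMulVec u u + K with hM
    set g := M⁻¹ *ᵥ f with hg
    have e1 : M *ᵥ g = f := by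
      rw [hg, Matrix.mulVec_mulVec, Matrix.mul_nonsing_inv _ hMu, Matrix.one_mulVec]
    have e2 : (σ ^ 2 * (u ⬝ᵥ g)) • u + K *ᵥ g = f := by
      rw [← e1, hM, Matrix.add_mulVec, Matrix.smul_mulVec, Matrix.vecMulVec_mulVec, mul_smul]
      simp
    have e3 : (σ ^ 2 * (u ⬝ᵥ g)) * a + u ⬝ᵥ g = (K⁻¹ *ᵥ u) ⬝ᵥ f := by
      rw [← hb, ← e2, Matrix.mulVec_add, Matrix.mulVec_mulVec, Matrix.nonsing_inv_mul _ hKu,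
        Matrix.one_mulVec, Matrix.mulVec_smul, dotProduct_add, dotProduct_smul, smul_eq_mul]
    have hpos : σ ^ 2 * a + 1 ≠ 0 := by positivity
    rw [← e3]
    field_simp
    ring
  simp_rw [key]
  rw [smul_dotProduct, smul_eq_mul]
  have ht : Tendsto (fun σ : ℝ => (σ ^ 2 * a + 1)⁻¹) atTop (nhds 0) := by
    apply Tendsto.inv_tendsto_atTop
    exact tendsto_atTop_add_const_right _ _
      ((tendsto_pow_atTop (by norm_num)).atTop_mul_const ha)
  simpa using (ht.const_sub 1).mul_const (a⁻¹ * ((K⁻¹ *ᵥ u) ⬝ᵥ f))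
end

section
/- Let H be a real inner product space and let v₁, …, vₙ ∈ H be linearly independent, with Gram matrix K defined by K_{ij} = ⟨vᵢ, vⱼ⟩ (which is then symmetric positive definite, hence invertible). Let 𝟏 ∈ ℝⁿ be the all-ones vector. Then the infimum over all w ∈ ℝⁿ with 𝟏ᵀw = 1 of sup{|∑_{i=1}^n wᵢ⟨f, vᵢ⟩| : f ∈ H, ‖f‖ ≤ 1} equals (𝟏ᵀK⁻¹𝟏)^{−1/2}, and this infimum is attained at w = K⁻¹𝟏/(𝟏ᵀK⁻¹𝟏). -/
open Matrix
open scoped RealInnerProductSpace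

theorem sup_eq_norm_aux {H : Type*} [NormedAddCommGroup H] [InnerProductSpace ℝ H]
    {n : ℕ} (v : Fin n → H) (w : Fin n → ℝ) :
    sSup ((fun f : H => |∑ i : Fin n, w i * ⟪f, v i⟫|) '' {f : H | ‖f‖ ≤ 1}) =
      ‖∑ i, w i • v i‖ := by
  have key : ∀ f : H, ∑ i : Fin n, w i * ⟪f, v i⟫ = ⟪f, ∑ i, w i • v i⟫ := by
    intro f
    simp [inner_sum, inner_smul_right]
  simp only [key]
  generalize ∑ i, w i • v i = g
  apply IsGreatest.csSup_eq
  constructor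
  · by_cases hg : g = 0
    · exact ⟨0, by simp, by simp [hg]⟩
    · have h0 : ‖g‖ ≠ 0 := norm_ne_zero_iff.mpr hg
      refine ⟨‖g‖⁻¹ • g, ?_, ?_⟩
      · simp [norm_smul, h0]
      · simp only [inner_smul_left, real_inner_self_eq_norm_sq]
        simp only [map_inv₀, conj_trivial]
        rw [show ‖g‖⁻¹ * ‖g‖ ^ 2 = ‖g‖ by field_simp, abs_norm]
  · rintro _ ⟨f, hf, rfl⟩
    have hf' : ‖f‖ ≤ 1 := hf
    calc |⟪f, g⟫| ≤ ‖f‖ * ‖g‖ := abs_real_inner_le_norm f g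
      _ ≤ 1 * ‖g‖ := by gcongr
      _ = ‖g‖ := one_mul _

/-- For linearly independent `v₁,…,vₙ` with Gram matrix `K`, the minimal worst case error
over weights summing to one is `(𝟏ᵀK⁻¹𝟏)^{-1/2}`, attained at `w = K⁻¹𝟏/(𝟏ᵀK⁻¹𝟏)`. -/
theorem optimal_worst_case_error
    {H : Type*} [NormedAddCommGroup H] [InnerProductSpace ℝ H]
    {n : ℕ} (hn : 1 ≤ n) (v : Fin n → H) (hv : LinearIndependent ℝ v)
    (K : Matrix (Fin n) (Fin n) ℝ) (hK : K = Matrix.of fun i j => ⟪v i, v j⟫)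
    (one : Fin n → ℝ) (hone : one = fun _ => 1)
    (wstar : Fin n → ℝ) (hwstar : wstar = (one ⬝ᵥ (K⁻¹ *ᵥ one))⁻¹ • (K⁻¹ *ᵥ one)) :
    K.PosDef ∧
      sInf ((fun w : Fin n → ℝ =>
          sSup ((fun f : H => |∑ i : Fin n, w i * ⟪f, v i⟫|) '' {f : H | ‖f‖ ≤ 1})) ''
            {w : Fin n → ℝ | one ⬝ᵥ w = 1}) =
        (Real.sqrt (one ⬝ᵥ (K⁻¹ *ᵥ one)))⁻¹ ∧
      one ⬝ᵥ wstar = 1 ∧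
      sSup ((fun f : H => |∑ i : Fin n, wstar i * ⟪f, v i⟫|) '' {f : H | ‖f‖ ≤ 1}) =
        (Real.sqrt (one ⬝ᵥ (K⁻¹ *ᵥ one)))⁻¹ := by
  have hKg : K = gram ℝ v := hK
  have hpd : K.PosDef := hKg ▸ posDef_gram_of_linearIndependent hv
  have hone0 : one ≠ 0 := by
    intro h
    have := congrFun h ⟨0, hn⟩
    simp [hone] at this
  have hdet : IsUnit K.det := (Matrix.isUnit_iff_isUnit_det _).mp hpd.isUnit
  have hs : 0 < one ⬝ᵥ (K⁻¹ *ᵥ one) := by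
    simpa using hpd.inv.dotProduct_mulVec_pos hone0
  have hin : ∀ w : Fin n → ℝ,
      ⟪∑ i, w i • v i, ∑ i, (K⁻¹ *ᵥ one) i • v i⟫ = one ⬝ᵥ w := by
    intro w
    rw [← star_dotProduct_gram_mulVec, ← hKg, mulVec_mulVec, Matrix.mul_nonsing_inv _ hdet,
      one_mulVec, dotProduct_comm]
    simp
  simp only [sup_eq_norm_aux]
  set s := one ⬝ᵥ (K⁻¹ *ᵥ one) with hsdef
  have hu : ‖∑ i, (K⁻¹ *ᵥ one) i • v i‖ = Real.sqrt s := by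
    rw [hsdef, ← hin, real_inner_self_eq_norm_sq, Real.sqrt_sq (norm_nonneg _)]
  have hsq : 0 < Real.sqrt s := Real.sqrt_pos.mpr hs
  have h1 : one ⬝ᵥ wstar = 1 := by
    rw [hwstar, dotProduct_smul, smul_eq_mul, ← hsdef, inv_mul_cancel₀ hs.ne']
  have h2 : ‖∑ i, wstar i • v i‖ = (Real.sqrt s)⁻¹ := by
    have : ∑ i, wstar i • v i = s⁻¹ • ∑ i, (K⁻¹ *ᵥ one) i • v i := by
      rw [hwstar, Finset.smul_sum]
      simp [smul_smul]
    rw [this, norm_smul, hu, Real.norm_of_nonneg (inv_nonneg.mpr hs.le)]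
    rw [inv_mul_eq_iff_eq_mul₀ hs.ne', eq_mul_inv_iff_mul_eq₀ hsq.ne',
      Real.mul_self_sqrt hs.le]
  refine ⟨hpd, ?_, h1, h2⟩
  apply IsLeast.csInf_eq
  refine ⟨⟨wstar, h1, h2⟩, ?_⟩
  rintro _ ⟨w, hw, rfl⟩
  have hw' : one ⬝ᵥ w = 1 := hw
  have h3 := real_inner_le_norm (∑ i, w i • v i) (∑ i, (K⁻¹ *ᵥ one) i • v i)
  rw [hin, hu, hw'] at h3
  exact (inv_le_iff_one_le_mul₀ hsq).mpr h3
end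

section
/- Let (M, d) be a compact metric space and let s > 0 and c > 0. For points z₁, …, zₙ ∈ M define the fill distance h(z₁,…,zₙ) = sup_{x ∈ M} min_{1 ≤ i ≤ n} d(x, zᵢ). Let ν and P be Borel probability measures on M such that P is absolutely continuous with respect to ν with dP/dν ≥ w ν-almost everywhere for some w ∈ (0,1). Suppose there is a finite constant C such that, for every n ≥ 2, if Y₁, …, Yₙ are independent random points each with law ν then E[h(Y₁,…,Yₙ)^s] ≤ C n^{−c} (log n)^{c}. Then there is a finite constant C′ such that, for every n ≥ 2, if X₁, …, Xₙ are independent random points each with law P then E[h(X₁,…,Xₙ)^s] ≤ C′ n^{−c} (log n)^{c}. -/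
open MeasureTheory

/-- The fill distance of the points `z₁,…,zₙ` in a metric space:
`h(z) = sup_{x ∈ M} min_{1 ≤ i ≤ n} d(x, zᵢ)`. -/
noncomputable def fillDistance {M : Type*} [MetricSpace M] {n : ℕ} (z : Fin n → M) : ℝ :=
  ⨆ x : M, ⨅ i : Fin n, dist x (z i)

open ENNReal

set_option linter.unusedSectionVars false

namespace FillAux

variable {M : Type*} [MetricSpace M] [CompactSpace M] [MeasurableSpace M] [BorelSpace M]

/-- averaging operator adding one random point -/
noncomputable def T (μ : Measure M) (f : Set M → ℝ≥0∞) : Set M → ℝ≥0∞ :=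
  fun S => ∫⁻ x, f (insert x S) ∂μ

/-- antitone measurable set functions -/
structure Good (f : Set M → ℝ≥0∞) : Prop where
  anti : Antitone f
  meas : ∀ (S : Set M) (n : ℕ), Measurable (fun z : Fin n → M => f (S ∪ Set.range z))

lemma union_range_cons (S : Set M) {n : ℕ} (x : M) (z : Fin n → M) :
    S ∪ Set.range (Fin.cons x z : Fin (n+1) → M) = insert x S ∪ Set.range z := by
  rw [Fin.range_cons, Set.union_insert, Set.insert_union]

lemma piFin_symm {n : ℕ} (p : M × (Fin n → M)) :
    (MeasurableEquiv.piFinSuccAbove (fun _ : Fin (n+1) => M) 0).symm p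
      = (Fin.cons p.1 p.2 : Fin (n+1) → M) := by
  rw [MeasurableEquiv.piFinSuccAbove_symm_apply, Fin.insertNthEquiv_zero]
  rfl

lemma Good.meas_pair {f : Set M → ℝ≥0∞} (hf : Good f) (S : Set M) (n : ℕ) :
    Measurable (fun p : M × (Fin n → M) => f (insert p.1 S ∪ Set.range p.2)) := by
  have h := (hf.meas S (n+1)).comp
    (MeasurableEquiv.piFinSuccAbove (fun _ : Fin (n+1) => M) 0).symm.measurable
  convert h using 2 with p
  exact congrArg f ((union_range_cons S p.1 p.2).symm.trans (by rw [piFin_symm]))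

lemma Good.meas_one {f : Set M → ℝ≥0∞} (hf : Good f) (S : Set M) :
    Measurable (fun x : M => f (insert x S)) := by
  have h := (hf.meas S 1).comp (measurable_pi_lambda (fun (x : M) (_ : Fin 1) => x)
    (fun _ => measurable_id))
  convert h using 2 with x
  simp [Function.comp, Set.range_const]

lemma Good.T {f : Set M → ℝ≥0∞} (hf : Good f) (μ : Measure M) [SFinite μ] : Good (T μ f) where
  anti := fun S S' h => lintegral_mono fun x => hf.anti (Set.insert_subset_insert h)
  meas := fun S n => by
    have h : Measurable (fun z : Fin n → M => ∫⁻ x, f (insert x S ∪ Set.range z) ∂μ) :=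
      Measurable.lintegral_prod_left (hf.meas_pair S n)
    simpa only [FillAux.T, Set.insert_union] using h

lemma Good.iter {f : Set M → ℝ≥0∞} (hf : Good f) (μ : Measure M) [SFinite μ] (n : ℕ) :
    Good ((FillAux.T μ)^[n] f) := by
  induction n with
  | zero => exact hf
  | succ n ih => rw [Function.iterate_succ_apply']; exact ih.T μ

lemma iter_eq {f : Set M → ℝ≥0∞} (hf : Good f) (μ : Measure M) [IsProbabilityMeasure μ] (n : ℕ) :
    ∀ S, (T μ)^[n] f S = ∫⁻ z : Fin n → M, f (S ∪ Set.range z) ∂(Measure.pi fun _ => μ) := by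
  induction n with
  | zero => intro S; simp
  | succ n ih =>
    intro S
    rw [Function.iterate_succ_apply']
    simp only [T]
    simp_rw [ih]
    have hmp := (measurePreserving_piFinSuccAbove (fun _ : Fin (n+1) => μ) 0).symm
    rw [← hmp.lintegral_comp (hf.meas S (n+1))]
    have : ∀ p : M × (Fin n → M), f (S ∪ Set.range
        ((MeasurableEquiv.piFinSuccAbove (fun _ : Fin (n+1) => M) 0).symm p))
        = f (insert p.1 S ∪ Set.range p.2) := by
      intro p
      rw [piFin_symm]
      exact congrArg f (union_range_cons S p.1 p.2)
    simp_rw [this]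
    rw [lintegral_prod _ (hf.meas_pair S n).aemeasurable]

lemma iter_mono (μ : Measure M) (n : ℕ) : ∀ {f g : Set M → ℝ≥0∞}, f ≤ g →
    (T μ)^[n] f ≤ (T μ)^[n] g := by
  induction n with
  | zero => intro f g h; exact h
  | succ n ih =>
    intro f g h
    rw [Function.iterate_succ_apply, Function.iterate_succ_apply]
    exact ih fun S => lintegral_mono fun x => h _

lemma iter_lin (μ : Measure M) [SFinite μ] (a b : ℝ≥0∞) (n : ℕ) :
    ∀ {f g : Set M → ℝ≥0∞}, Good f → Good g →
    (T μ)^[n] (fun S => a * f S + b * g S) =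
      fun S => a * (T μ)^[n] f S + b * (T μ)^[n] g S := by
  induction n with
  | zero => intro f g _ _; rfl
  | succ n ih =>
    intro f g hf hg
    rw [Function.iterate_succ_apply, Function.iterate_succ_apply, Function.iterate_succ_apply,
      ← ih (hf.T μ) (hg.T μ)]
    congr 1
    funext S
    simp only [T]
    rw [lintegral_add_left ((hf.meas_one S).const_mul a), lintegral_const_mul _ (hf.meas_one S),
      lintegral_const_mul _ (hg.meas_one S)]

lemma step {ν P R : Measure M} {a : ℝ≥0∞} (hP : P = a • ν + R) {f : Set M → ℝ≥0∞} (hf : Good f) :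
    T P f ≤ fun S => a * T ν f S + R Set.univ * f S := by
  intro S
  simp only [T]
  rw [hP, lintegral_add_measure, lintegral_smul_measure, smul_eq_mul]
  gcongr
  calc ∫⁻ x, f (insert x S) ∂(R) ≤ ∫⁻ x, f S ∂(R) :=
        lintegral_mono fun x => hf.anti (Set.subset_insert x S)
    _ = R Set.univ * f S := by rw [lintegral_const, mul_comm]

lemma main_ind {ν P R : Measure M} [IsProbabilityMeasure ν] [IsProbabilityMeasure P] {w : ℝ}
    (hw0 : 0 < w) (hw1 : w < 1)
    (hP : P = ENNReal.ofReal w • ν + R) (hR : R Set.univ = ENNReal.ofReal (1 - w))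
    {f : Set M → ℝ≥0∞} (hf : Good f) (N : ℕ) (α β : ℝ) (hα : 0 ≤ α) (hβ : 0 ≤ β)
    (hG : ∀ k ≤ N, (T ν)^[k] f ∅ ≤ ENNReal.ofReal (α + β * (1/2) ^ k)) (m : ℕ) :
    ∀ k, k + m ≤ N →
      (T P)^[m] ((T ν)^[k] f) ∅ ≤ ENNReal.ofReal (α + β * (1/2) ^ k * (1 - w/2) ^ m) := by
  induction m with
  | zero => intro k hk; simpa using hG k hk
  | succ m ih =>
    intro k hk
    have hq : 0 ≤ 1 - w/2 := by linarith
    rw [Function.iterate_succ_apply]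
    have h1 := iter_mono P m (step hP (hf.iter ν k)) ∅
    rw [iter_lin P _ _ m ((hf.iter ν k).T ν) (hf.iter ν k), hR] at h1
    refine h1.trans ?_
    have h2 := ih (k+1) (by omega)
    have h3 := ih k (by omega)
    rw [Function.iterate_succ_apply'] at h2
    calc _ ≤ ENNReal.ofReal w * ENNReal.ofReal (α + β * (1/2) ^ (k+1) * (1 - w/2) ^ m)
          + ENNReal.ofReal (1-w) * ENNReal.ofReal (α + β * (1/2) ^ k * (1 - w/2) ^ m) := by
            beta_reduce
            gcongr
      _ = _ := by
        rw [← ENNReal.ofReal_mul hw0.le, ← ENNReal.ofReal_mul (by linarith),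
          ← ENNReal.ofReal_add (mul_nonneg hw0.le (by positivity))
            (mul_nonneg (by linarith) (by positivity))]
        congr 1
        ring

/-- truncated fill distance power -/
noncomputable def H (M : Type*) [MetricSpace M] (s : ℝ) (S : Set M) : ℝ≥0∞ :=
  (⨆ x : M, min (Metric.ediam (Set.univ : Set M)) (Metric.infEDist x S)) ^ s

lemma ediam_ne_top : Metric.ediam (Set.univ : Set M) ≠ ⊤ :=
  (isCompact_univ.isBounded).ediam_ne_top

lemma H_le {s : ℝ} (hs : 0 < s) (S : Set M) :
    H M s S ≤ (Metric.ediam (Set.univ : Set M)) ^ s :=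
  ENNReal.rpow_le_rpow (iSup_le fun _ => min_le_left _ _) hs.le

lemma H_good {s : ℝ} (hs : 0 < s) : Good (H M s) where
  anti := fun S S' h => ENNReal.rpow_le_rpow
    (iSup_mono fun x => min_le_min le_rfl (Metric.infEDist_anti h)) hs.le
  meas := fun S n => by
    refine Measurable.pow_const (LowerSemicontinuous.measurable ?_) s
    refine lowerSemicontinuous_iSup fun x => Continuous.lowerSemicontinuous ?_
    have : ∀ z : Fin n → M, Metric.infEDist x (S ∪ Set.range z)
        = min (Metric.infEDist x S) (⨅ i, edist x (z i)) := by
      intro z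
      rw [Metric.infEDist_union]
      simp only [Metric.infEDist, iInf_range]
    simp_rw [this]
    refine continuous_const.min (continuous_const.min ?_)
    simp_rw [← Finset.inf_univ_eq_iInf]
    exact Continuous.finset_inf_apply fun i _ => continuous_const.edist (continuous_apply i)

lemma fill_eq {s : ℝ} {n : ℕ} (hn : 0 < n) (z : Fin n → M) :
    fillDistance z ^ s = (H M s (Set.range z)).toReal := by
  haveI : Nonempty (Fin n) := ⟨⟨0, hn⟩⟩
  have h1 : ∀ x : M, min (Metric.ediam (Set.univ : Set M)) (Metric.infEDist x (Set.range z))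
      = ⨅ i, edist x (z i) := by
    intro x
    have h : Metric.infEDist x (Set.range z) = ⨅ i, edist x (z i) := by
      simp only [Metric.infEDist, iInf_range]
    rw [h]
    refine min_eq_right ((iInf_le _ ⟨0, hn⟩).trans
      (Metric.edist_le_ediam_of_mem (Set.mem_univ _) (Set.mem_univ _)))
  rw [H, ← ENNReal.toReal_rpow]
  simp_rw [h1]
  rw [ENNReal.toReal_iSup, fillDistance]
  · congr 2
    funext x
    rw [ENNReal.toReal_iInf (fun i => edist_ne_top _ _)]
    simp only [dist_edist]
  · intro x
    exact ne_top_of_le_ne_top (edist_ne_top x (z ⟨0, hn⟩)) (iInf_le _ _)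

lemma H_ne_top {s : ℝ} (hs : 0 < s) (S : Set M) : H M s S ≠ ⊤ :=
  ne_top_of_le_ne_top (ENNReal.rpow_ne_top_of_nonneg hs.le ediam_ne_top) (H_le hs S)

lemma iter_H {s : ℝ} (hs : 0 < s) (μ : Measure M) [IsProbabilityMeasure μ] (n : ℕ) :
    (T μ)^[n] (H M s) ∅ ≤ (Metric.ediam (Set.univ : Set M)) ^ s := by
  rw [iter_eq (H_good hs)]
  refine (lintegral_mono fun z => H_le hs _).trans ?_
  simp

lemma integral_eq {s : ℝ} (hs : 0 < s) (μ : Measure M) [IsProbabilityMeasure μ] {n : ℕ}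
    (hn : 0 < n) :
    ∫ z : Fin n → M, (fillDistance z) ^ s ∂(Measure.pi fun _ : Fin n => μ)
      = ((T μ)^[n] (H M s) ∅).toReal := by
  simp_rw [fill_eq hn]
  rw [iter_eq (H_good hs)]
  simp only [Set.empty_union]
  refine integral_toReal ?_ (Filter.Eventually.of_forall fun z => (H_ne_top hs _).lt_top)
  simpa using ((H_good (M := M) hs).meas ∅ n).aemeasurable

lemma decomp {ν P : Measure M} [IsProbabilityMeasure ν] [IsProbabilityMeasure P] {w : ℝ}
    (hw0 : 0 < w)
    (hlb : ∀ᵐ x ∂ν, ENNReal.ofReal w ≤ P.rnDeriv ν x) :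
    ∃ R : Measure M, P = ENNReal.ofReal w • ν + R ∧ R Set.univ = ENNReal.ofReal (1 - w) := by
  have hle : ENNReal.ofReal w • ν ≤ P := by
    rw [← withDensity_const]
    exact (withDensity_mono hlb).trans (Measure.withDensity_rnDeriv_le P ν)
  haveI : IsFiniteMeasure (ENNReal.ofReal w • ν) := isFiniteMeasure_of_le P hle
  refine ⟨P - ENNReal.ofReal w • ν, ?_, ?_⟩
  · rw [add_comm, Measure.sub_add_cancel_of_le hle]
  · rw [Measure.sub_apply MeasurableSet.univ hle]
    simp [ENNReal.ofReal_sub _ hw0.le]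

lemma bdd {u : ℝ} (hu0 : 0 < u) (hu1 : u < 1) (c : ℝ) :
    ∃ B : ℝ, ∀ n : ℕ, (n : ℝ) ^ c * u ^ n ≤ B := by
  have h := (tendsto_rpow_mul_exp_neg_mul_atTop_nhds_zero c (-Real.log u)
    (by linarith [Real.log_neg hu0 hu1])).comp tendsto_natCast_atTop_atTop
  obtain ⟨B, hB⟩ := h.bddAbove_range
  refine ⟨B, fun n => ?_⟩
  have := hB ⟨n, rfl⟩
  simp only [Function.comp, neg_neg] at this
  rwa [mul_comm (Real.log u), Real.exp_nat_mul, Real.exp_log hu0] at this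

end FillAux

/-- If the expected `s`-th power of the fill distance of `n` i.i.d. samples from a reference
probability measure `ν` on a compact metric space decays like `n^{-c} (log n)^c`, then the same
rate holds for i.i.d. samples from any probability measure `P` whose density with respect to `ν`
is bounded below by some `w ∈ (0,1)`. -/
theorem fill_distance_rate_transfer
    {M : Type*} [MetricSpace M] [CompactSpace M] [MeasurableSpace M] [BorelSpace M]
    (s c : ℝ) (hs : 0 < s) (hc : 0 < c)
    (ν P : Measure M) [IsProbabilityMeasure ν] [IsProbabilityMeasure P]
    (hPν : P ≪ ν) (w : ℝ) (hw : w ∈ Set.Ioo (0 : ℝ) 1)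
    (hlb : ∀ᵐ x ∂ν, ENNReal.ofReal w ≤ P.rnDeriv ν x)
    (C : ℝ)
    (hC : ∀ n : ℕ, 2 ≤ n →
      ∫ z : Fin n → M, (fillDistance z) ^ s ∂(Measure.pi fun _ : Fin n => ν) ≤
        C * (n : ℝ) ^ (-c) * (Real.log n) ^ c) :
    ∃ C' : ℝ, ∀ n : ℕ, 2 ≤ n →
      ∫ z : Fin n → M, (fillDistance z) ^ s ∂(Measure.pi fun _ : Fin n => P) ≤
        C' * (n : ℝ) ^ (-c) * (Real.log n) ^ c := by
  obtain ⟨hw0, hw1⟩ := hw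
  obtain ⟨R, hP, hR⟩ := FillAux.decomp hw0 hlb
  set D : ℝ≥0∞ := (Metric.ediam (Set.univ : Set M)) ^ s with hD
  have hDt : D ≠ ⊤ := ENNReal.rpow_ne_top_of_nonneg hs.le FillAux.ediam_ne_top
  set E : ℝ := D.toReal with hE
  have hE0 : 0 ≤ E := ENNReal.toReal_nonneg
  have hDE : D = ENNReal.ofReal E := (ENNReal.ofReal_toReal hDt).symm
  set q : ℝ := 1 - w / 2 with hq
  have hq0 : 0 < q := by rw [hq]; linarith
  have hq1 : q < 1 := by rw [hq]; linarith
  set u : ℝ := Real.sqrt q with hu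
  have hu0 : 0 < u := Real.sqrt_pos.2 hq0
  have hu1 : u < 1 := by rw [hu, Real.sqrt_lt' one_pos]; simpa using hq1
  have huq : u * u = q := Real.mul_self_sqrt hq0.le
  obtain ⟨B, hB⟩ := FillAux.bdd hu0 hu1 c
  have hB0 : 0 ≤ B := (by positivity : (0:ℝ) ≤ ((1:ℕ) : ℝ) ^ c * u ^ 1).trans (hB 1)
  set θ : ℝ := Real.logb 2 u⁻¹ with hθ
  have hθ0 : 0 < θ := Real.logb_pos one_lt_two ((one_lt_inv₀ hu0).2 hu1)
  have h2θ : (2:ℝ) ^ θ = u⁻¹ := Real.rpow_logb two_pos (by norm_num) (by positivity)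
  have hlog2 : 0 < Real.log 2 := Real.log_pos one_lt_two
  refine ⟨|C| * θ ^ (-c) + 2 * E * B / (Real.log 2) ^ c, fun n hn => ?_⟩
  have hn0 : (0:ℝ) < n := by exact_mod_cast (by omega : 0 < n)
  have hL2 : Real.log 2 ≤ Real.log n := Real.log_le_log two_pos (by exact_mod_cast hn)
  have hL0 : 0 < Real.log n := hlog2.trans_le hL2
  set α : ℝ := |C| * θ ^ (-c) * (n:ℝ) ^ (-c) * (Real.log n) ^ c with hα
  set β : ℝ := 2 * E * (u⁻¹) ^ n with hβ
  have hα0 : 0 ≤ α := by positivity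
  have hβ0 : 0 ≤ β := by positivity
  have hun : 1 ≤ (u⁻¹) ^ n := one_le_pow₀ ((one_lt_inv₀ hu0).2 hu1).le
  have hG : ∀ k ≤ n, (FillAux.T ν)^[k] (FillAux.H M s) ∅ ≤
      ENNReal.ofReal (α + β * (1/2) ^ k) := by
    intro k hk
    have hkD := FillAux.iter_H hs ν k
    rw [← hD, hDE] at hkD
    by_cases h1 : k < 2
    · refine hkD.trans (ENNReal.ofReal_le_ofReal ?_)
      have : (1/2:ℝ) ≤ (1/2) ^ k := by
        interval_cases k <;> norm_num
      have h3 : 2 * E * 1 * (1/2) ≤ β * (1/2) ^ k := by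
        rw [hβ]; gcongr
      linarith
    · push Not at h1
      have hk0 : (0:ℝ) < k := by exact_mod_cast (by omega : 0 < k)
      by_cases h2 : (k:ℝ) < θ * n
      · refine hkD.trans (ENNReal.ofReal_le_ofReal ?_)
        have h3 : (2:ℝ) ^ k ≤ (u⁻¹) ^ n := by
          rw [← h2θ, ← Real.rpow_natCast, ← Real.rpow_natCast, ← Real.rpow_mul two_pos.le]
          exact Real.rpow_le_rpow_of_exponent_le one_le_two h2.le
        have h4 : E * (2 ^ k * (1/2) ^ k) ≤ β * (1/2) ^ k := by
          rw [hβ, ← mul_assoc]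
          gcongr
          linarith
        rw [← mul_pow] at h4
        norm_num at h4
        norm_num
        linarith
      · push Not at h2
        have hne : (FillAux.T ν)^[k] (FillAux.H M s) ∅ ≠ ⊤ :=
          ne_top_of_le_ne_top ENNReal.ofReal_ne_top hkD
        rw [← ENNReal.ofReal_toReal hne, ← FillAux.integral_eq hs ν (by omega)]
        refine ENNReal.ofReal_le_ofReal ((hC k h1).trans ?_)
        have h5 : C * (k:ℝ) ^ (-c) * (Real.log k) ^ c ≤ α := by
          have hlk : 0 ≤ Real.log k := Real.log_natCast_nonneg k
          calc C * (k:ℝ) ^ (-c) * (Real.log k) ^ c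
              ≤ |C| * (θ * n) ^ (-c) * (Real.log n) ^ c := by
                have e1 : (k:ℝ) ^ (-c) ≤ (θ * n) ^ (-c) :=
                  Real.rpow_le_rpow_of_nonpos (by positivity) h2 (by linarith)
                have e2 : (Real.log k) ^ c ≤ (Real.log n) ^ c :=
                  Real.rpow_le_rpow hlk (Real.log_le_log hk0 (by exact_mod_cast hk)) hc.le
                gcongr
                exact le_abs_self C
            _ = α := by rw [hα, Real.mul_rpow hθ0.le hn0.le]; ring
        have : 0 ≤ β * (1/2) ^ k := by positivity
        linarith
  have hfin := FillAux.main_ind hw0 hw1 hP hR (FillAux.H_good hs) n α β hα0 hβ0 hG n 0 (by omega)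
  rw [FillAux.integral_eq hs P (by omega)]
  refine (ENNReal.toReal_le_of_le_ofReal (by positivity) hfin).trans ?_
  have e1 : β * (1/2) ^ 0 * q ^ n = 2 * E * u ^ n := by
    rw [hβ, ← huq, mul_pow, inv_pow]
    field_simp
  rw [e1]
  have e2 : u ^ n ≤ B * (n:ℝ) ^ (-c) := by
    rw [Real.rpow_neg hn0.le, ← div_eq_mul_inv, le_div_iff₀ (by positivity), mul_comm]
    exact hB n
  have e3 : 1 ≤ (Real.log n) ^ c / (Real.log 2) ^ c := by
    rw [one_le_div (by positivity)]
    exact Real.rpow_le_rpow hlog2.le hL2 hc.le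
  calc α + 2 * E * u ^ n ≤ α + 2 * E * (B * (n:ℝ) ^ (-c)) * 1 := by
        rw [mul_one]; gcongr
    _ ≤ α + 2 * E * (B * (n:ℝ) ^ (-c)) * ((Real.log n) ^ c / (Real.log 2) ^ c) := by gcongr
    _ = _ := by rw [hα]; ring
end

section
/- Let w ∈ (0,1), a > 0 and D > 0, and for each n ∈ ℕ let m_n be a Binomial(n, w) random variable. Define φ : ℕ → ℝ by φ(m) = D if m ≤ 1 and φ(m) = min(D, m^{−a} (log m)^{a}) if m ≥ 2. Then there exists a finite constant C′ such that E[φ(m_n)] ≤ C′ n^{−a} (log n)^{a} for all n ≥ 2. -/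
open Finset

lemma aux_asc_le (k p : ℕ) : (k + 1).ascFactorial p ≤ p.factorial * (k + 1) ^ p := by
  induction p with
  | zero => simp
  | succ p ih =>
    rw [Nat.ascFactorial_succ, Nat.factorial_succ, pow_succ]
    have h : k + 1 + p ≤ (p + 1) * (k + 1) := by nlinarith [Nat.zero_le (p * k)]
    calc (k + 1 + p) * (k + 1).ascFactorial p
        ≤ ((p + 1) * (k + 1)) * (p.factorial * (k + 1) ^ p) := Nat.mul_le_mul h ih
      _ = _ := by ring

lemma aux_le_asc (n p : ℕ) : n ^ p ≤ (n + 1).ascFactorial p := by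
  induction p with
  | zero => simp
  | succ p ih =>
    rw [Nat.ascFactorial_succ, pow_succ, mul_comm]
    exact Nat.mul_le_mul (by omega) ih

lemma aux_choose (n k p : ℕ) (hk : k ≤ n) :
    (n + p).choose (k + p) * (k + 1).ascFactorial p = n.choose k * (n + 1).ascFactorial p := by
  have h1 := Nat.choose_mul_factorial_mul_factorial (show k + p ≤ n + p by omega)
  have h2 := Nat.choose_mul_factorial_mul_factorial hk
  have e : n + p - (k + p) = n - k := by omega
  rw [e, ← Nat.factorial_mul_ascFactorial k p, ← Nat.factorial_mul_ascFactorial n p, ← h2] at h1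
  have hpos : 0 < k.factorial * (n - k).factorial :=
    Nat.mul_pos (Nat.factorial_pos _) (Nat.factorial_pos _)
  apply Nat.eq_of_mul_eq_mul_left hpos
  linarith

lemma aux_term (n k p : ℕ) (hk : k ≤ n) :
    n.choose k * n ^ p ≤ p.factorial * (n + p).choose (k + p) * (k + 1) ^ p := by
  calc n.choose k * n ^ p ≤ n.choose k * (n + 1).ascFactorial p :=
        Nat.mul_le_mul_left _ (aux_le_asc n p)
    _ = (n + p).choose (k + p) * (k + 1).ascFactorial p := (aux_choose n k p hk).symm
    _ ≤ (n + p).choose (k + p) * (p.factorial * (k + 1) ^ p) :=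
        Nat.mul_le_mul_left _ (aux_asc_le k p)
    _ = _ := by ring

lemma aux_binom (w : ℝ) (n : ℕ) :
    ∑ k ∈ Finset.range (n + 1), (n.choose k : ℝ) * w ^ k * (1 - w) ^ (n - k) = 1 := by
  have h := add_pow w (1 - w) n
  rw [add_sub_cancel, one_pow] at h
  refine Eq.trans ?_ h.symm
  exact Finset.sum_congr rfl fun k _ => by ring

lemma aux_shift (w : ℝ) (hw : w ∈ Set.Ioo (0 : ℝ) 1) (n p : ℕ) :
    ∑ k ∈ Finset.range (n + 1),
      ((n + p).choose (k + p) : ℝ) * w ^ (k + p) * (1 - w) ^ (n - k) ≤ 1 := by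
  have h1 : 0 ≤ 1 - w := by linarith [hw.2]
  have h0 := hw.1.le
  have hb := aux_binom w (n + p)
  rw [show n + p + 1 = p + (n + 1) by ring, Finset.sum_range_add] at hb
  have e : ∀ k ∈ Finset.range (n + 1),
      ((n + p).choose (k + p) : ℝ) * w ^ (k + p) * (1 - w) ^ (n - k) =
      ((n + p).choose (p + k) : ℝ) * w ^ (p + k) * (1 - w) ^ (n + p - (p + k)) := by
    intro k _
    rw [add_comm k p, show n + p - (p + k) = n - k by omega]
  rw [Finset.sum_congr rfl e]
  have : 0 ≤ ∑ k ∈ Finset.range p,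
      ((n + p).choose k : ℝ) * w ^ k * (1 - w) ^ (n + p - k) :=
    Finset.sum_nonneg fun k _ => by positivity
  linarith

lemma aux_moment (w : ℝ) (hw : w ∈ Set.Ioo (0 : ℝ) 1) (n p : ℕ) :
    ∑ k ∈ Finset.range (n + 1), (n.choose k : ℝ) * w ^ k * (1 - w) ^ (n - k) *
      ((n : ℝ) / (k + 1)) ^ p ≤ p.factorial / w ^ p := by
  have h1 : 0 ≤ 1 - w := by linarith [hw.2]
  have h0 := hw.1
  have key : ∀ k ∈ Finset.range (n + 1), (n.choose k : ℝ) * w ^ k * (1 - w) ^ (n - k) *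
      ((n : ℝ) / (k + 1)) ^ p ≤ p.factorial / w ^ p *
      (((n + p).choose (k + p) : ℝ) * w ^ (k + p) * (1 - w) ^ (n - k)) := by
    intro k hk
    have hk' : k ≤ n := by simpa [Nat.lt_succ_iff] using hk
    have ht : (n.choose k : ℝ) * n ^ p ≤
        p.factorial * (n + p).choose (k + p) * ((k : ℝ) + 1) ^ p := by
      exact_mod_cast aux_term n k p hk'
    have hq : (n.choose k : ℝ) * ((n : ℝ) / (k + 1)) ^ p ≤
        p.factorial * (n + p).choose (k + p) := by
      rw [div_pow, ← mul_div_assoc, div_le_iff₀ (by positivity)]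
      exact ht
    calc _ = ((n.choose k : ℝ) * ((n : ℝ) / (k + 1)) ^ p) * (w ^ k * (1 - w) ^ (n - k)) := by ring
      _ ≤ (p.factorial * (n + p).choose (k + p)) * (w ^ k * (1 - w) ^ (n - k)) :=
        mul_le_mul_of_nonneg_right hq (by positivity)
      _ = _ := by rw [pow_add]; field_simp
  refine (Finset.sum_le_sum key).trans ?_
  rw [← Finset.mul_sum]
  exact mul_le_of_le_one_right (by positivity) (aux_shift w hw n p)

lemma aux_rpow (a : ℝ) (ha : 0 < a) (p : ℕ) (hp : a ≤ p) (x : ℝ) (hx : 0 < x) :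
    x ^ a ≤ 1 + x ^ p := by
  rcases le_total x 1 with h | h
  · have := Real.rpow_le_one hx.le h ha.le
    have : 0 ≤ x ^ p := by positivity
    linarith
  · have := Real.rpow_le_rpow_of_exponent_le h hp
    rw [Real.rpow_natCast] at this
    linarith

/-- If `m_n ~ Binomial(n, w)` and `φ(m) = D` for `m ≤ 1`, `φ(m) = min(D, m^{-a} (log m)^a)`
for `m ≥ 2`, then `E[φ(m_n)] = O(n^{-a} (log n)^a)`. -/
theorem binomial_expectation_rate
    (w : ℝ) (hw : w ∈ Set.Ioo (0 : ℝ) 1) (a : ℝ) (ha : 0 < a) (D : ℝ) (hD : 0 < D)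
    (φ : ℕ → ℝ)
    (hφ₁ : ∀ m : ℕ, m ≤ 1 → φ m = D)
    (hφ₂ : ∀ m : ℕ, 2 ≤ m → φ m = min D ((m : ℝ) ^ (-a) * (Real.log m) ^ a)) :
    ∃ C' : ℝ, ∀ n : ℕ, 2 ≤ n →
      ∑ k ∈ Finset.range (n + 1),
          (n.choose k : ℝ) * w ^ k * (1 - w) ^ (n - k) * φ k ≤
        C' * (n : ℝ) ^ (-a) * (Real.log n) ^ a := by
  obtain ⟨p, hp⟩ := exists_nat_ge a
  have h1 : 0 ≤ 1 - w := by linarith [hw.2]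
  have h0 := hw.1
  have hl2 : 0 < Real.log 2 := Real.log_pos (by norm_num)
  set K : ℝ := D * 2 ^ a * (Real.log 2) ^ (-a) + 2 ^ a with hK
  have hA : (0 : ℝ) < 2 ^ a := by positivity
  have hB : (0 : ℝ) < (Real.log 2) ^ (-a) := by positivity
  have hK0 : 0 < K := by positivity
  refine ⟨K * (1 + p.factorial / w ^ p), fun n hn => ?_⟩
  have hn' : (2 : ℝ) ≤ n := by exact_mod_cast hn
  have hn0 : (0 : ℝ) < n := by linarith
  have hlog : Real.log 2 ≤ Real.log n := Real.log_le_log (by norm_num) hn'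
  have hL : 0 < Real.log n := by linarith
  have hLa : 0 < (Real.log n) ^ a := by positivity
  have hφ : ∀ k ≤ n, φ k ≤ K * (Real.log n) ^ a * ((k : ℝ) + 1) ^ (-a) := by
    intro k hk
    rcases Nat.lt_or_ge k 2 with h | h
    · rw [hφ₁ k (by omega)]
      have hk1 : (k : ℝ) + 1 ≤ 2 := by
        have : (k : ℝ) ≤ 1 := by exact_mod_cast (by omega : k ≤ 1)
        linarith
      have e1 : (2 : ℝ) ^ (-a) ≤ ((k : ℝ) + 1) ^ (-a) :=
        Real.rpow_le_rpow_of_nonpos (by positivity) hk1 (by linarith)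
      have e2 : (Real.log 2) ^ a ≤ (Real.log n) ^ a := Real.rpow_le_rpow hl2.le hlog ha.le
      have e3 : (2 : ℝ) ^ a * 2 ^ (-a) = 1 := by
        rw [← Real.rpow_add (by norm_num)]; simp
      have e4 : (Real.log 2) ^ (-a) * (Real.log 2) ^ a = 1 := by
        rw [← Real.rpow_add hl2]; simp
      calc D = D * (2 ^ a * 2 ^ (-a)) * ((Real.log 2) ^ (-a) * (Real.log 2) ^ a) := by
            rw [e3, e4]; ring
        _ = (D * 2 ^ a * (Real.log 2) ^ (-a)) * (Real.log 2) ^ a * 2 ^ (-a) := by ring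
        _ ≤ K * (Real.log n) ^ a * ((k : ℝ) + 1) ^ (-a) := by
            gcongr
            linarith
    · rw [hφ₂ k h]
      refine (min_le_right _ _).trans ?_
      have hk2 : (2 : ℝ) ≤ k := by exact_mod_cast h
      have hkn : (k : ℝ) ≤ n := by exact_mod_cast hk
      have e2 : (Real.log k) ^ a ≤ (Real.log n) ^ a :=
        Real.rpow_le_rpow (Real.log_nonneg (by linarith))
          (Real.log_le_log (by linarith) hkn) ha.le
      have e1 : (k : ℝ) ^ (-a) ≤ 2 ^ a * ((k : ℝ) + 1) ^ (-a) := by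
        have : (k : ℝ) ^ (-a) ≤ (((k : ℝ) + 1) / 2) ^ (-a) :=
          Real.rpow_le_rpow_of_nonpos (by positivity) (by linarith) (by linarith)
        rw [Real.div_rpow (by positivity) (by norm_num), Real.rpow_neg (by norm_num : (0:ℝ) ≤ 2),
          div_inv_eq_mul] at this
        linarith
      have hKA : (2 : ℝ) ^ a ≤ K := by
        have : 0 < D * 2 ^ a * (Real.log 2) ^ (-a) := by positivity
        linarith
      calc (k : ℝ) ^ (-a) * (Real.log k) ^ a
          ≤ (2 ^ a * ((k : ℝ) + 1) ^ (-a)) * (Real.log n) ^ a := by gcongr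
        _ ≤ (K * ((k : ℝ) + 1) ^ (-a)) * (Real.log n) ^ a := by gcongr
        _ = _ := by ring
  have hpt : ∀ k : ℕ, ((k : ℝ) + 1) ^ (-a) ≤ (n : ℝ) ^ (-a) * (1 + ((n : ℝ) / (k + 1)) ^ p) := by
    intro k
    have h := aux_rpow a ha p hp ((n : ℝ) / (k + 1)) (by positivity)
    have e : ((k : ℝ) + 1) ^ (-a) = (n : ℝ) ^ (-a) * ((n : ℝ) / (k + 1)) ^ a := by
      have : (0 : ℝ) < (n : ℝ) ^ a := by positivity
      rw [Real.div_rpow hn0.le (by positivity), Real.rpow_neg hn0.le,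
        Real.rpow_neg (by positivity)]
      field_simp
    rw [e]
    gcongr
  calc ∑ k ∈ Finset.range (n + 1), (n.choose k : ℝ) * w ^ k * (1 - w) ^ (n - k) * φ k
      ≤ ∑ k ∈ Finset.range (n + 1), (K * (Real.log n) ^ a * (n : ℝ) ^ (-a)) *
          ((n.choose k : ℝ) * w ^ k * (1 - w) ^ (n - k) +
           (n.choose k : ℝ) * w ^ k * (1 - w) ^ (n - k) * ((n : ℝ) / (k + 1)) ^ p) := by
        refine Finset.sum_le_sum fun k hk => ?_
        have hk' : k ≤ n := by simpa [Nat.lt_succ_iff] using hk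
        have hb : φ k ≤ K * (Real.log n) ^ a *
            ((n : ℝ) ^ (-a) * (1 + ((n : ℝ) / (k + 1)) ^ p)) :=
          (hφ k hk').trans (mul_le_mul_of_nonneg_left (hpt k) (by positivity))
        refine (mul_le_mul_of_nonneg_left hb (by positivity)).trans (le_of_eq ?_)
        ring
    _ ≤ (K * (Real.log n) ^ a * (n : ℝ) ^ (-a)) * (1 + p.factorial / w ^ p) := by
        rw [← Finset.mul_sum, Finset.sum_add_distrib, aux_binom]
        have := aux_moment w hw n p
        gcongr
    _ = _ := by ring
end
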